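/- Define Q(u,v) = Γ(u,v)/Γ(u) for u > 0 and v ≥ 0. Fix v ∈ (0,1). Suppose c₁ > c₂ > 0 and u₁ > u₂ > 0, and let q₁, q₂ > 0 be the points satisfying Q(u₁,q₁) = v and Q(u₂,q₂) = v. Then the 2×2 determinant Γ(c₁+u₁,q₁)·Γ(c₂+u₂,q₂) − Γ(c₁+u₂,q₂)·Γ(c₂+u₁,q₁) is strictly positive. (Equivalently, for fixed v the function (c,u) ↦ Γ(c+u, Q^{−1}(u,v)) is strictly totally positive of order 2.) -/

import Mathlib

open MeasureTheory

/-- The upper incomplete gamma function `Γ(u,v) = ∫_v^∞ x^(u-1) e^(-x) dx`. -/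
noncomputable def upperGamma (u v : ℝ) : ℝ :=
  ∫ x in Set.Ioi v, x ^ (u - 1) * Real.exp (-x)

/-!
The kernel `(c, x) ↦ x ^ c` is strictly totally positive of order 2 on `(0, ∞)`. If `u ↦ q u` is
increasing, then `(x, u) ↦ 𝟙_{x > q u} x ^ (u - 1) e ^ (-x)` is totally positive of order 2: for
`y < x` the truncation either leaves the minor as it is, or removes its negative term, or makes it
zero. Since `Γ(c + u, q u)` is the composition of these two kernels, Andréief's identity writes
twice its `2 × 2` minor as the double integral of a product of minors, which is nonnegative
everywhere and positive for `q u₂ < y < q u₁ < x`.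

That `u ↦ Q⁻¹(u, v)` is increasing comes from another instance of the same inequality: with
exponents `u₁ > u₂` and truncation points `q > 0` it says that `Q(u₁, q) > Q(u₂, q)`.
-/

section Minor

variable {α : Type*}

/-- The `2 × 2` minor `det [φᵢ(xⱼ)]` of the functions `φ₁, φ₂` at the points `x₁ = x`, `x₂ = y`.
A kernel `K(c, x)` is totally positive of order 2 if `K ≥ 0` and the minors of `K(c₁, ·), K(c₂, ·)`
at `x, y` are nonnegative for `c₂ < c₁` and `y < x`. -/
def minor₂ (φ₁ φ₂ : α → ℝ) (x y : α) : ℝ :=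
  φ₁ x * φ₂ y - φ₁ y * φ₂ x

theorem minor₂_swap (φ₁ φ₂ : α → ℝ) (x y : α) :
    minor₂ φ₁ φ₂ y x = -minor₂ φ₁ φ₂ x y :=
  (neg_sub _ _).symm

theorem minor₂_mul_minor₂ (φ₁ φ₂ ψ₁ ψ₂ : α → ℝ) (x y : α) :
    minor₂ φ₁ φ₂ x y * minor₂ ψ₁ ψ₂ x y =
      ((φ₁ x * ψ₁ x) * (φ₂ y * ψ₂ y) + (φ₂ x * ψ₂ x) * (φ₁ y * ψ₁ y)) -
        ((φ₁ x * ψ₂ x) * (φ₂ y * ψ₁ y) + (φ₂ x * ψ₁ x) * (φ₁ y * ψ₂ y)) := by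
  unfold minor₂
  ring

end Minor

section Andreief

variable {α : Type*} [MeasurableSpace α] {μ : Measure α} {φ₁ φ₂ ψ₁ ψ₂ : α → ℝ}

theorem integrable_minor₂_mul_minor₂
    (h₁₁ : Integrable (fun x => φ₁ x * ψ₁ x) μ) (h₁₂ : Integrable (fun x => φ₁ x * ψ₂ x) μ)
    (h₂₁ : Integrable (fun x => φ₂ x * ψ₁ x) μ) (h₂₂ : Integrable (fun x => φ₂ x * ψ₂ x) μ) :
    Integrable (fun z : α × α => minor₂ φ₁ φ₂ z.1 z.2 * minor₂ ψ₁ ψ₂ z.1 z.2) (μ.prod μ) := by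
  simp_rw [minor₂_mul_minor₂]
  exact ((h₁₁.mul_prod h₂₂).add (h₂₂.mul_prod h₁₁)).sub
    ((h₁₂.mul_prod h₂₁).add (h₂₁.mul_prod h₁₂))

variable [SFinite μ]

theorem integral_minor₂_mul_minor₂
    (h₁₁ : Integrable (fun x => φ₁ x * ψ₁ x) μ) (h₁₂ : Integrable (fun x => φ₁ x * ψ₂ x) μ)
    (h₂₁ : Integrable (fun x => φ₂ x * ψ₁ x) μ) (h₂₂ : Integrable (fun x => φ₂ x * ψ₂ x) μ) :
    ∫ z : α × α, minor₂ φ₁ φ₂ z.1 z.2 * minor₂ ψ₁ ψ₂ z.1 z.2 ∂μ.prod μ =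
      2 * ((∫ x, φ₁ x * ψ₁ x ∂μ) * (∫ x, φ₂ x * ψ₂ x ∂μ) -
        (∫ x, φ₁ x * ψ₂ x ∂μ) * ∫ x, φ₂ x * ψ₁ x ∂μ) := by
  have integral_mul_add_mul {f g : α → ℝ} (hf : Integrable f μ) (hg : Integrable g μ) :
      ∫ z : α × α, f z.1 * g z.2 + g z.1 * f z.2 ∂μ.prod μ =
        2 * ((∫ x, f x ∂μ) * ∫ x, g x ∂μ) := by
    rw [integral_add (hf.mul_prod hg) (hg.mul_prod hf), integral_prod_mul, integral_prod_mul]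
    ring
  simp_rw [minor₂_mul_minor₂]
  rw [mul_sub, ← integral_mul_add_mul h₁₁ h₂₂, ← integral_mul_add_mul h₁₂ h₂₁]
  exact integral_sub ((h₁₁.mul_prod h₂₂).add (h₂₂.mul_prod h₁₁))
    ((h₁₂.mul_prod h₂₁).add (h₂₁.mul_prod h₁₂))

theorem integral_mul_integral_sub_pos_of_minor₂
    (h₁₁ : Integrable (fun x => φ₁ x * ψ₁ x) μ) (h₁₂ : Integrable (fun x => φ₁ x * ψ₂ x) μ)
    (h₂₁ : Integrable (fun x => φ₂ x * ψ₁ x) μ) (h₂₂ : Integrable (fun x => φ₂ x * ψ₂ x) μ)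
    (minors_nonneg : ∀ x y, 0 ≤ minor₂ φ₁ φ₂ x y * minor₂ ψ₁ ψ₂ x y)
    {A B : Set α} (hA : μ A ≠ 0) (hB : μ B ≠ 0)
    (minors_pos : ∀ x ∈ A, ∀ y ∈ B, 0 < minor₂ φ₁ φ₂ x y * minor₂ ψ₁ ψ₂ x y) :
    0 < (∫ x, φ₁ x * ψ₁ x ∂μ) * (∫ x, φ₂ x * ψ₂ x ∂μ) -
      (∫ x, φ₁ x * ψ₂ x ∂μ) * ∫ x, φ₂ x * ψ₁ x ∂μ := by
  refine pos_of_mul_pos_right (a := 2) ?_ zero_le_two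
  rw [← integral_minor₂_mul_minor₂ h₁₁ h₁₂ h₂₁ h₂₂]
  refine (integral_pos_iff_support_of_nonneg (fun z : α × α => minors_nonneg z.1 z.2)
    (integrable_minor₂_mul_minor₂ h₁₁ h₁₂ h₂₁ h₂₂)).2 ?_
  calc
    0 < μ A * μ B := ENNReal.mul_pos hA hB
    _ = μ.prod μ (A ×ˢ B) := (Measure.prod_prod A B).symm
    _ ≤ _ := measure_mono fun z hz => (minors_pos z.1 hz.1 z.2 hz.2).ne'

end Andreief

section RpowKernel

variable {a b x y : ℝ}

theorem minor₂_rpow_pos (hy : 0 < y) (hyx : y < x) (hba : b < a) :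
    0 < minor₂ (· ^ a) (· ^ b) x y := by
  have hx : 0 < x := hy.trans hyx
  refine sub_pos.2 ?_
  calc
    y ^ a * x ^ b = y ^ (a - b) * (x ^ b * y ^ b) := by
      rw [mul_left_comm, ← Real.rpow_add hy, sub_add_cancel, mul_comm]
    _ < x ^ (a - b) * (x ^ b * y ^ b) := by gcongr
    _ = x ^ a * y ^ b := by rw [← mul_assoc, ← Real.rpow_add hx, sub_add_cancel]

theorem minor₂_rpow_nonneg (hy : 0 < y) (hyx : y ≤ x) (hba : b ≤ a) :
    0 ≤ minor₂ (· ^ a) (· ^ b) x y := by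
  rcases hyx.eq_or_lt with rfl | hyx
  · exact (sub_self _).ge
  rcases hba.eq_or_lt with rfl | hba
  · exact (sub_eq_zero.2 (mul_comm _ _)).ge
  exact (minor₂_rpow_pos hy hyx hba).le

end RpowKernel

/-- The truncated gamma density `𝟙_{x > q} x ^ (u - 1) e ^ (-x)`, as a function on all of `ℝ`.
Its moments are the values `Γ(c + u, q)`. -/
noncomputable def truncatedGammaDensity (u q : ℝ) : ℝ → ℝ :=
  (Set.Ioi q).indicator fun x => x ^ (u - 1) * Real.exp (-x)

section TruncatedGammaDensity

variable {c c₁ c₂ u u₁ u₂ q q₁ q₂ x y : ℝ}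

theorem truncatedGammaDensity_of_lt (h : q < x) :
    truncatedGammaDensity u q x = x ^ (u - 1) * Real.exp (-x) :=
  Set.indicator_of_mem h _

theorem truncatedGammaDensity_of_le (h : x ≤ q) : truncatedGammaDensity u q x = 0 :=
  Set.indicator_of_notMem h.not_gt _

theorem truncatedGammaDensity_pos (hq : 0 ≤ q) (h : q < x) : 0 < truncatedGammaDensity u q x := by
  have hx : 0 < x := hq.trans_lt h
  rw [truncatedGammaDensity_of_lt h]
  positivity

theorem truncatedGammaDensity_nonneg (hq : 0 ≤ q) : 0 ≤ truncatedGammaDensity u q x :=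
  Set.indicator_nonneg (fun z (hz : q < z) => by have := hq.trans_lt hz; positivity) x

theorem minor₂_truncatedGammaDensity_nonneg (hq₂ : 0 ≤ q₂) (hq : q₂ ≤ q₁) (hu : u₂ ≤ u₁)
    (hyx : y ≤ x) :
    0 ≤ minor₂ (truncatedGammaDensity u₁ q₁) (truncatedGammaDensity u₂ q₂) x y := by
  have hq₁ : 0 ≤ q₁ := hq₂.trans hq
  rw [minor₂]
  rcases le_or_gt y q₁ with hy | hy
  · rw [truncatedGammaDensity_of_le hy, zero_mul, sub_zero]
    exact mul_nonneg (truncatedGammaDensity_nonneg hq₁) (truncatedGammaDensity_nonneg hq₂)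
  · have hx : q₁ < x := hy.trans_le hyx
    have powers_nonneg : 0 ≤ minor₂ (· ^ (u₁ - 1)) (· ^ (u₂ - 1)) x y :=
      minor₂_rpow_nonneg (hq₁.trans_lt hy) hyx (sub_le_sub_right hu 1)
    rw [truncatedGammaDensity_of_lt hy, truncatedGammaDensity_of_lt hx,
      truncatedGammaDensity_of_lt (hq.trans_lt hy), truncatedGammaDensity_of_lt (hq.trans_lt hx)]
    calc
      0 ≤ minor₂ (· ^ (u₁ - 1)) (· ^ (u₂ - 1)) x y * (Real.exp (-x) * Real.exp (-y)) := by
        positivity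
      _ = _ := by
        unfold minor₂
        ring

theorem minor₂_rpow_mul_minor₂_truncatedGammaDensity_nonneg (hc : c₂ ≤ c₁) (hq₂ : 0 ≤ q₂)
    (hq : q₂ ≤ q₁) (hu : u₂ ≤ u₁) (x y : ℝ) :
    0 ≤ minor₂ (· ^ c₁) (· ^ c₂) x y *
      minor₂ (truncatedGammaDensity u₁ q₁) (truncatedGammaDensity u₂ q₂) x y := by
  wlog hyx : y ≤ x generalizing x y
  · rw [minor₂_swap _ _ y x, minor₂_swap _ _ y x, neg_mul_neg]
    exact this y x (le_of_not_ge hyx)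
  rcases le_or_gt y q₂ with hy | hy
  · refine (mul_eq_zero_of_right _ ?_).ge
    simp only [minor₂, truncatedGammaDensity_of_le hy, truncatedGammaDensity_of_le (hy.trans hq),
      mul_zero, zero_mul, sub_zero]
  · exact mul_nonneg (minor₂_rpow_nonneg (hq₂.trans_lt hy) hyx hc)
      (minor₂_truncatedGammaDensity_nonneg hq₂ hq hu hyx)

theorem minor₂_truncatedGammaDensity_pos (hq₂ : 0 ≤ q₂) (hx : q₁ < x) (hy : y ∈ Set.Ioc q₂ q₁) :
    0 < minor₂ (truncatedGammaDensity u₁ q₁) (truncatedGammaDensity u₂ q₂) x y := by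
  have hq₁ : 0 ≤ q₁ := hq₂.trans (hy.1.le.trans hy.2)
  rw [minor₂, truncatedGammaDensity_of_le hy.2, zero_mul, sub_zero]
  exact mul_pos (truncatedGammaDensity_pos hq₁ hx) (truncatedGammaDensity_pos hq₂ hy.1)

theorem rpow_mul_truncatedGammaDensity (hq : 0 ≤ q) :
    (fun x => x ^ c * truncatedGammaDensity u q x) = truncatedGammaDensity (c + u) q := by
  funext x
  rcases le_or_gt x q with hx | hx
  · simp only [truncatedGammaDensity_of_le hx, mul_zero]
  · rw [truncatedGammaDensity_of_lt hx, truncatedGammaDensity_of_lt hx, add_sub_assoc,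
      Real.rpow_add (hq.trans_lt hx), mul_assoc]

theorem integrable_truncatedGammaDensity (hq : 0 ≤ q) (h : 0 < u ∨ 0 < q) :
    Integrable (truncatedGammaDensity u q) := by
  rw [truncatedGammaDensity, integrable_indicator_iff measurableSet_Ioi]
  simp only [mul_comm _ (Real.exp _)]
  rcases h with hu | hq
  · exact (Real.GammaIntegral_convergent hu).mono_set (Set.Ioi_subset_Ioi hq)
  · refine integrable_of_isBigO_exp_neg one_half_pos (fun x hx => ?_)
      (Real.Gamma_integrand_isLittleO (u - 1)).isBigO
    have hx₀ : x ≠ 0 := (hq.trans_le hx).ne'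
    exact (Real.continuous_exp.comp continuous_neg).continuousWithinAt.mul
      (Real.continuousAt_rpow_const x _ (.inl hx₀)).continuousWithinAt

theorem integrable_rpow_mul_truncatedGammaDensity (hq : 0 ≤ q) (h : 0 < c + u ∨ 0 < q) :
    Integrable fun x => x ^ c * truncatedGammaDensity u q x := by
  rw [rpow_mul_truncatedGammaDensity hq]
  exact integrable_truncatedGammaDensity hq h

theorem upperGamma_eq_integral_truncatedGammaDensity (u q : ℝ) :
    upperGamma u q = ∫ x, truncatedGammaDensity u q x :=
  (integral_indicator measurableSet_Ioi).symm

end TruncatedGammaDensity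

section UpperGamma

variable {c₁ c₂ u u₁ u₂ q q₁ q₂ : ℝ}

theorem upperGamma_minor_pos (hc : c₂ < c₁) (hu : u₂ ≤ u₁) (hq₂ : 0 ≤ q₂) (hq : q₂ < q₁)
    (h : 0 < c₂ + u₂ ∨ 0 < q₂) :
    0 < upperGamma (c₁ + u₁) q₁ * upperGamma (c₂ + u₂) q₂ -
      upperGamma (c₁ + u₂) q₂ * upperGamma (c₂ + u₁) q₁ := by
  have hq₁ : 0 < q₁ := hq₂.trans_lt hq
  have h' : 0 < c₁ + u₂ ∨ 0 < q₂ := h.imp_left fun h => h.trans (by gcongr)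
  simp only [upperGamma_eq_integral_truncatedGammaDensity,
    ← rpow_mul_truncatedGammaDensity hq₁.le, ← rpow_mul_truncatedGammaDensity hq₂]
  exact integral_mul_integral_sub_pos_of_minor₂ (A := Set.Ioi q₁) (B := Set.Ioc q₂ q₁)
    (integrable_rpow_mul_truncatedGammaDensity hq₁.le (.inr hq₁))
    (integrable_rpow_mul_truncatedGammaDensity hq₂ h')
    (integrable_rpow_mul_truncatedGammaDensity hq₁.le (.inr hq₁))
    (integrable_rpow_mul_truncatedGammaDensity hq₂ h)
    (minor₂_rpow_mul_minor₂_truncatedGammaDensity_nonneg hc.le hq₂ hq.le hu)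
    (isOpen_Ioi.measure_pos _ Set.nonempty_Ioi).ne'
    (by simpa only [Real.volume_Ioc, ne_eq, ENNReal.ofReal_eq_zero, not_le, sub_pos] using hq)
    fun x hx y hy => mul_pos
      (minor₂_rpow_pos (hq₂.trans_lt hy.1) (hy.2.trans_lt hx) hc)
      (minor₂_truncatedGammaDensity_pos hq₂ hx hy)

theorem upperGamma_zero_right (hu : 0 < u) : upperGamma u 0 = Real.Gamma u := by
  simp only [Real.Gamma_eq_integral hu, upperGamma, mul_comm]

theorem upperGamma_zero_right_pos (hu : 0 < u) : 0 < upperGamma u 0 :=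
  upperGamma_zero_right hu ▸ Real.Gamma_pos_of_pos hu

theorem upperGamma_antitoneOn (hu : 0 < u) : AntitoneOn (upperGamma u) (Set.Ici 0) := by
  intro p hp q hq hpq
  simp only [upperGamma_eq_integral_truncatedGammaDensity]
  refine integral_mono (integrable_truncatedGammaDensity hq (.inl hu))
    (integrable_truncatedGammaDensity hp (.inl hu)) fun x => ?_
  rcases le_or_gt x q with hx | hx
  · exact (truncatedGammaDensity_of_le hx).trans_le (truncatedGammaDensity_nonneg hp)
  · rw [truncatedGammaDensity_of_lt hx, truncatedGammaDensity_of_lt (hpq.trans_lt hx)]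

/-- The regularized upper incomplete gamma function `Q(u, q) = Γ(u, q) / Γ(u)`, with `Γ(u)` written
as `Γ(u, 0)`. -/
noncomputable def regularizedUpperGamma (u q : ℝ) : ℝ :=
  upperGamma u q / upperGamma u 0

theorem regularizedUpperGamma_antitoneOn (hu : 0 < u) :
    AntitoneOn (regularizedUpperGamma u) (Set.Ici 0) :=
  fun _ hp _ hq hpq => div_le_div_of_nonneg_right (upperGamma_antitoneOn hu hp hq hpq)
    (upperGamma_zero_right_pos hu).le

theorem regularizedUpperGamma_strictMonoOn_left (hq : 0 < q) :
    StrictMonoOn (fun u => regularizedUpperGamma u q) (Set.Ioi 0) := by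
  intro u₂ hu₂ u₁ hu₁ hu
  have minor_pos := upperGamma_minor_pos hu (le_refl 0) le_rfl hq (.inl (by rwa [add_zero]))
  simp only [add_zero, sub_pos] at minor_pos
  simp only [regularizedUpperGamma]
  rw [div_lt_div_iff₀ (upperGamma_zero_right_pos hu₂) (upperGamma_zero_right_pos hu₁), mul_comm]
  exact minor_pos

theorem lt_of_regularizedUpperGamma_eq (hu₂ : 0 < u₂) (hu : u₂ < u₁) (hq₁ : 0 ≤ q₁) (hq₂ : 0 < q₂)
    (hQ : regularizedUpperGamma u₁ q₁ = regularizedUpperGamma u₂ q₂) : q₂ < q₁ := by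
  by_contra! hq
  have hu₁ : 0 < u₁ := hu₂.trans hu
  exact lt_irrefl _ <| calc
    regularizedUpperGamma u₂ q₂ < regularizedUpperGamma u₁ q₂ :=
      regularizedUpperGamma_strictMonoOn_left hq₂ hu₂ hu₁ hu
    _ ≤ regularizedUpperGamma u₁ q₁ := regularizedUpperGamma_antitoneOn hu₁ hq₁ hq₂.le hq
    _ = regularizedUpperGamma u₂ q₂ := hQ

theorem stmt_9_general (hc : c₂ < c₁) (hu₂ : 0 < u₂) (hu : u₂ < u₁)
    (hq₁ : 0 ≤ q₁) (hq₂ : 0 < q₂)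
    (hQ : regularizedUpperGamma u₁ q₁ = regularizedUpperGamma u₂ q₂) :
    0 < upperGamma (c₁ + u₁) q₁ * upperGamma (c₂ + u₂) q₂ -
      upperGamma (c₁ + u₂) q₂ * upperGamma (c₂ + u₁) q₁ :=
  upperGamma_minor_pos hc hu.le hq₂.le (lt_of_regularizedUpperGamma_eq hu₂ hu hq₁ hq₂ hQ) (.inr hq₂)

end UpperGamma

/-- Fix `v ∈ (0,1)`. For `c₁ > c₂ > 0` and `u₁ > u₂ > 0`, with
`q₁, q₂ > 0` the points where `Q(u₁,q₁) = v` and `Q(u₂,q₂) = v`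
(`Q(u,q) = Γ(u,q)/Γ(u)`, `Γ(u) = Γ(u,0)`), the determinant
`Γ(c₁+u₁,q₁)Γ(c₂+u₂,q₂) − Γ(c₁+u₂,q₂)Γ(c₂+u₁,q₁)` is strictly positive;
i.e. `(c,u) ↦ Γ(c+u, Q⁻¹(u,v))` is STP₂. -/
theorem stmt_9 (v : ℝ) (hv0 : 0 < v) (hv1 : v < 1)
    (c1 c2 u1 u2 : ℝ) (hc2 : 0 < c2) (hc : c2 < c1) (hu2 : 0 < u2) (hu : u2 < u1)
    (q1 q2 : ℝ) (hq1 : 0 < q1) (hq2 : 0 < q2)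
    (hQ1 : upperGamma u1 q1 / upperGamma u1 0 = v)
    (hQ2 : upperGamma u2 q2 / upperGamma u2 0 = v) :
    0 < upperGamma (c1 + u1) q1 * upperGamma (c2 + u2) q2 -
        upperGamma (c1 + u2) q2 * upperGamma (c2 + u1) q1 :=
  stmt_9_general hc hu2 hu hq1.le hq2 (hQ1.trans hQ2.symm)
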